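/- Let k ≥ 4 be an even integer and let n be a positive integer with n ≡ 0 (mod (3k-4)/2). Then h(n,k) ≤ n(3k+8)(k-2)/(4(3k-4)). -/

import Mathlib

/-!
Write `m = k / 2 - 1` and `n = c (3 m + 1)`. A `k`-saturated graph on `n` vertices with exactly
`c m (3 m + 7) / 2` edges, which is the claimed bound, is built from `c` copies `x` of the following
piece (`extG`, with `a = c - 1`, `b = m - 1`). Two outer cliques `K_m` (the sides) and a core clique
`K_(m+1)`, whose vertices are indexed by the `m` indices of the sides and one more vertex, the apex.
Each outer vertex is joined to the core vertex of the same index and to one apex. That apex is the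
apex of copy `0`, except for the outer vertices of index `0`, which use the apex of their own copy.
So outer vertices have degree `m + 1`, core vertices have degree `m + 2`, and only the apex of
copy `0` may have larger degree. Using a single apex of large degree is essential: if each copy had
its own, joining a core vertex of one copy to the apex of another would create no long path.

A path with non-decreasing degrees uses vertices of one side and then of one core, so it has at most
`2 m + 1 = k - 1` vertices (`mp_extG_le`). When a non-edge is added its ends gain one in degree,
which allows a path on `2 m + 2` vertices: the cases are `sat_outer_outer`, `sat_outer_core` and
`sat_core_core`. The long paths are assembled with `UpPath.clique` and `UpPath.traverse`, which
record only the vertex set and the last vertex of a path and let it sweep through a whole clique.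
-/


open SimpleGraph

variable {V : Type*}

/-- The degree of a vertex `v`: the number of neighbours of `v`. -/
noncomputable def gdeg (G : SimpleGraph V) (v : V) : ℕ := (G.neighborSet v).ncard

/-- A walk is degree monotone if the sequence of degrees of the vertices in the
order in which they appear on the walk is monotone (non-decreasing or non-increasing). -/
def IsDegMonotone (G : SimpleGraph V) {u v : V} (p : G.Walk u v) : Prop :=
  (p.support.map (gdeg G)).Chain' (· ≤ ·) ∨ (p.support.map (gdeg G)).Chain' (· ≥ ·)

/-- `mp G` is the maximum number of vertices of a degree monotone path in `G`. -/
noncomputable def mp (G : SimpleGraph V) : ℕ :=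
  sSup {n | ∃ (u v : V) (p : G.Walk u v), p.IsPath ∧ IsDegMonotone G p ∧ p.support.length = n}

/-- The graph obtained from `G` by adding the edge `uv`. -/
def addEdge (G : SimpleGraph V) (u v : V) : SimpleGraph V :=
  G ⊔ fromEdgeSet {s(u, v)}

/-- `G` is saturated if adding any edge between non-adjacent vertices increases `mp`. -/
def Saturated (G : SimpleGraph V) : Prop :=
  ∀ u v : V, u ≠ v → ¬ G.Adj u v → mp G < mp (addEdge G u v)

/-- `G` is `k`-saturated if `mp G < k` and adding any edge between non-adjacent
vertices creates a degree monotone path on at least `k` vertices. -/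
def KSaturated (k : ℕ) (G : SimpleGraph V) : Prop :=
  mp G < k ∧ ∀ u v : V, u ≠ v → ¬ G.Adj u v → k ≤ mp (addEdge G u v)

/-- `hSat n k` is the minimum number of edges of a `k`-saturated graph on `n` vertices. -/
noncomputable def hSat (n k : ℕ) : ℕ :=
  sInf {m | ∃ G : SimpleGraph (Fin n), KSaturated k G ∧ G.edgeSet.ncard = m}

/-! ### Degree monotone paths in a general graph -/

/-- Adjacency along which the degree does not decrease. -/
def UpAdj (G : SimpleGraph V) (x y : V) : Prop := G.Adj x y ∧ gdeg G x ≤ gdeg G y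

/-- `UpPath G S b`: some path with non-decreasing degrees has vertex set `S` and last vertex `b`. -/
inductive UpPath [DecidableEq V] (G : SimpleGraph V) : Finset V → V → Prop
  | single (a : V) : UpPath G {a} a
  | step {S : Finset V} {b c : V} (h : UpPath G S b) (hbc : UpAdj G b c) (hc : c ∉ S) :
      UpPath G (insert c S) c

theorem UpPath.exists_walk [DecidableEq V] {G : SimpleGraph V} {S : Finset V} {b : V}
    (h : UpPath G S b) : ∃ (a : V) (p : G.Walk a b), p.IsPath ∧
      p.support.IsChain (fun x y => gdeg G x ≤ gdeg G y) ∧ p.support.toFinset = S := by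
  induction h with
  | single a => exact ⟨a, .nil, by simp, by simp, by simp⟩
  | @step S b c h hbc hc ih =>
    obtain ⟨a, p, hp, hch, hS⟩ := ih
    have hcs : c ∉ p.support := by simpa [← hS] using hc
    refine ⟨a, p.concat hbc.1, hp.concat hcs hbc.1, ?_, ?_⟩
    · rw [Walk.support_concat, List.isChain_append]
      refine ⟨hch, by simp, ?_⟩
      intro x hx y hy
      rw [List.getLast?_eq_getLast_of_ne_nil p.support_ne_nil, Walk.getLast_support] at hx
      simp at hx hy
      subst hx hy
      exact hbc.2
    · rw [Walk.support_concat]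
      ext w
      simp [← hS]

theorem bddAbove_pathLengths [Fintype V] (G : SimpleGraph V) :
    BddAbove {n | ∃ (u v : V) (p : G.Walk u v),
      p.IsPath ∧ IsDegMonotone G p ∧ p.support.length = n} := by
  refine ⟨Fintype.card V, ?_⟩
  rintro _ ⟨u, v, p, hp, -, rfl⟩
  exact hp.support_nodup.length_le_card

theorem UpPath.card_le_mp [Fintype V] [DecidableEq V] {G : SimpleGraph V} {S : Finset V} {b : V}
    (h : UpPath G S b) : S.card ≤ mp G := by
  obtain ⟨a, p, hp, hch, hS⟩ := h.exists_walk
  refine le_csSup (bddAbove_pathLengths G) ⟨a, b, p, hp, Or.inl ?_, ?_⟩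
  · exact (List.isChain_map _).2 hch
  · rw [← hS, List.toFinset_card_of_nodup hp.support_nodup]

/-- A path can be prolonged through all of a clique `T` into any prescribed last vertex `e`; only
`e` may have a degree larger than the other vertices of `T`. -/
theorem UpPath.extend [DecidableEq V] {G : SimpleGraph V} (T : Finset V) :
    ∀ {S : Finset V} {b e : V}, UpPath G S b → Disjoint S T → e ∈ T →
      (∀ x ∈ insert b T, ∀ y ∈ T, x ≠ y → x ≠ e → UpAdj G x y) → UpPath G (S ∪ T) e := by
  induction T using Finset.strongInduction with
  | H T ih =>
    intro S b e h hd he hT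
    have heS : e ∉ S := fun hh => Finset.disjoint_left.1 hd hh he
    have hbS : b ∈ S := by cases h <;> simp
    rcases (T.erase e).eq_empty_or_nonempty with h0 | ⟨e', he'⟩
    · have hTe : T = {e} := by
        rw [← Finset.insert_erase he, h0]; rfl
      subst hTe
      rw [Finset.union_comm]
      exact h.step (hT b (by simp) e (by simp) (by rintro rfl; exact heS hbS)
        (by rintro rfl; exact heS hbS)) heS
    · have h1 : UpPath G (S ∪ T.erase e) e' := by
        refine ih _ (Finset.erase_ssubset he) h
          (hd.mono_right (Finset.erase_subset _ _)) he' ?_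
        intro x hx y hy hxy _
        have hxe : x ≠ e := by
          rcases Finset.mem_insert.1 hx with rfl | hx
          · rintro rfl; exact heS hbS
          · exact (Finset.mem_erase.1 hx).1
        refine hT x ?_ y (Finset.mem_of_mem_erase hy) hxy hxe
        rcases Finset.mem_insert.1 hx with rfl | hx
        · simp
        · exact Finset.mem_insert_of_mem (Finset.mem_of_mem_erase hx)
      have h2 := h1.step (c := e) (hT e' (by simp [Finset.mem_of_mem_erase he']) e he
        (Finset.mem_erase.1 he').1 (Finset.mem_erase.1 he').1) (by simp [heS])
      convert h2 using 1
      rw [← Finset.union_insert, Finset.insert_erase he]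

/-- A clique is the vertex set of a path with prescribed last vertex. -/
theorem UpPath.clique [DecidableEq V] {G : SimpleGraph V} {T : Finset V} {e : V} (he : e ∈ T)
    (hT : ∀ x ∈ T, ∀ y ∈ T, x ≠ y → x ≠ e → UpAdj G x y) : UpPath G T e := by
  rcases (T.erase e).eq_empty_or_nonempty with h0 | ⟨b, hb⟩
  · have hTe : T = {e} := by
      rw [← Finset.insert_erase he, h0]; rfl
    subst hTe
    exact .single e
  · rw [Finset.mem_erase] at hb
    have := (UpPath.single (G := G) b).extend (T.erase b) (e := e) (by simp)
      (by simp [he, hb.1.symm]) (by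
        rw [Finset.insert_erase hb.2]
        exact fun x hx y hy => hT x hx y (Finset.mem_of_mem_erase hy))
    rwa [← Finset.insert_eq, Finset.insert_erase hb.2] at this

/-- A path can enter a clique `T` at `a`, visit all of it, and stop at `e`. -/
theorem UpPath.traverse [DecidableEq V] {G : SimpleGraph V} {S T : Finset V} {b a e : V}
    (h : UpPath G S b) (hba : UpAdj G b a) (ha : a ∈ T) (he : e ∈ T) (hae : a = e → T = {a})
    (hd : Disjoint S T) (hT : ∀ x ∈ T, ∀ y ∈ T, x ≠ y → x ≠ e → UpAdj G x y) :
    UpPath G (S ∪ T) e := by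
  have h1 := h.step hba (fun hh => Finset.disjoint_left.1 hd hh ha)
  by_cases hh : a = e
  · rw [hae hh, Finset.union_comm, ← Finset.insert_eq, ← hh]
    exact h1
  · have := h1.extend (T.erase a) (e := e) (by
        rw [Finset.disjoint_insert_left]
        exact ⟨by simp, hd.mono_right (Finset.erase_subset _ _)⟩)
      (by simp [he, Ne.symm hh]) (by
        rw [Finset.insert_erase ha]
        exact fun x hx y hy => hT x hx y (Finset.mem_of_mem_erase hy))
    rwa [Finset.insert_union, ← Finset.union_insert, Finset.insert_erase ha] at this

theorem mp_le_of_chain {G : SimpleGraph V} {N : ℕ}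
    (h : ∀ l : List V, l.Nodup → l.IsChain (UpAdj G) → l.length ≤ N) : mp G ≤ N := by
  refine csSup_le' ?_
  rintro _ ⟨u, v, p, hp, hm, rfl⟩
  have key : ∀ {u v : V} (p : G.Walk u v), p.IsPath →
      (p.support.map (gdeg G)).IsChain (· ≤ ·) → p.support.length ≤ N := by
    intro u v p hp hm
    refine h _ hp.support_nodup ?_
    have h1 := p.isChain_adj_support
    have h2 := (List.isChain_map _).1 hm
    rw [List.isChain_iff_getElem] at h1 h2 ⊢
    exact fun i hi => ⟨h1 i hi, h2 i hi⟩
  rcases hm with hm | hm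
  · exact key p hp hm
  · have := key p.reverse hp.reverse (by
      rw [Walk.support_reverse, List.map_reverse, List.isChain_reverse]
      exact hm)
    simpa using this

theorem addEdge_adj {G : SimpleGraph V} {u v x y : V} (huv : u ≠ v) :
    (addEdge G u v).Adj x y ↔ G.Adj x y ∨ (x = u ∧ y = v) ∨ (x = v ∧ y = u) := by
  simp only [addEdge, sup_adj, fromEdgeSet_adj, Set.mem_singleton_iff, Sym2.eq_iff]
  constructor
  · rintro (h | ⟨h, -⟩) <;> tauto
  · rintro (h | h)
    · exact Or.inl h
    · refine Or.inr ⟨h, ?_⟩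
      rcases h with ⟨rfl, rfl⟩ | ⟨rfl, rfl⟩
      · exact huv
      · exact huv.symm

theorem addEdge_comm (G : SimpleGraph V) (u v : V) : addEdge G u v = addEdge G v u := by
  simp [addEdge, Sym2.eq_swap]

open Classical in
theorem gdeg_addEdge [Finite V] {G : SimpleGraph V} {u v : V} (huv : u ≠ v)
    (hn : ¬ G.Adj u v) (w : V) :
    gdeg (addEdge G u v) w = gdeg G w + if w = u ∨ w = v then 1 else 0 := by
  unfold gdeg
  by_cases hu : w = u
  · subst hu
    have : (addEdge G w v).neighborSet w = insert v (G.neighborSet w) := by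
      ext y; simp [mem_neighborSet, addEdge_adj huv, huv, or_comm]
    rw [this, Set.ncard_insert_of_notMem (by simpa using hn) (Set.toFinite _)]
    simp
  · by_cases hv : w = v
    · subst hv
      have : (addEdge G u w).neighborSet w = insert u (G.neighborSet w) := by
        ext y; simp [mem_neighborSet, addEdge_adj huv, huv.symm, or_comm]
      rw [this, Set.ncard_insert_of_notMem (by simpa [adj_comm] using hn) (Set.toFinite _)]
      simp
    · have : (addEdge G u v).neighborSet w = G.neighborSet w := by
        ext y; simp [mem_neighborSet, addEdge_adj huv, hu, hv]
      rw [this]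
      simp [hu, hv]

section
variable [Finite V] {G : SimpleGraph V} {u v x y : V}

theorem upAdj_of_ne (huv : u ≠ v) (hn : ¬ G.Adj u v) (h : G.Adj x y) (hd : gdeg G x ≤ gdeg G y)
    (hu : x ≠ u) (hv : x ≠ v) : UpAdj (addEdge G u v) x y := by
  refine ⟨(addEdge_adj huv).2 (Or.inl h), ?_⟩
  rw [gdeg_addEdge huv hn, gdeg_addEdge huv hn]
  simp [hu, hv]
  omega

theorem upAdj_of_lt (huv : u ≠ v) (hn : ¬ G.Adj u v) (h : G.Adj x y)
    (hd : gdeg G x + 1 ≤ gdeg G y) : UpAdj (addEdge G u v) x y := by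
  refine ⟨(addEdge_adj huv).2 (Or.inl h), ?_⟩
  rw [gdeg_addEdge huv hn, gdeg_addEdge huv hn]
  split_ifs <;> omega

theorem upAdj_left (huv : u ≠ v) (hn : ¬ G.Adj u v) (h : G.Adj x u)
    (hd : gdeg G x ≤ gdeg G u + 1) (hu : x ≠ u) (hv : x ≠ v) :
    UpAdj (addEdge G u v) x u := by
  refine ⟨(addEdge_adj huv).2 (Or.inl h), ?_⟩
  rw [gdeg_addEdge huv hn, gdeg_addEdge huv hn]
  simp [hu, hv]
  omega

theorem upAdj_new (huv : u ≠ v) (hn : ¬ G.Adj u v) (hd : gdeg G u ≤ gdeg G v) :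
    UpAdj (addEdge G u v) u v := by
  refine ⟨(addEdge_adj huv).2 (by simp), ?_⟩
  rw [gdeg_addEdge huv hn, gdeg_addEdge huv hn]
  simp
  omega
end

/-! ### Invariance under isomorphism -/

theorem gdeg_iso {W : Type*} {G : SimpleGraph V} {H : SimpleGraph W} (φ : G ≃g H) (x : V) :
    gdeg H (φ x) = gdeg G x := by
  unfold gdeg
  have : H.neighborSet (φ x) = φ '' G.neighborSet x := by
    ext y
    constructor
    · intro hy
      exact ⟨φ.symm y, by simpa using φ.symm.map_adj_iff.2 hy, by simp⟩
    · rintro ⟨z, hz, rfl⟩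
      exact φ.map_adj_iff.2 hz
  rw [this, Set.ncard_image_of_injective _ φ.injective]

theorem mp_iso_le {W : Type*} [Fintype W] {G : SimpleGraph V} {H : SimpleGraph W}
    (φ : G ≃g H) : mp G ≤ mp H := by
  refine csSup_le' ?_
  rintro _ ⟨u, v, p, hp, hm, rfl⟩
  refine le_csSup (bddAbove_pathLengths H) ⟨φ u, φ v, p.map φ.toHom,
    hp.map φ.injective, ?_, by simp⟩
  have : gdeg H ∘ φ.toHom = gdeg G := funext fun x => gdeg_iso φ x
  unfold IsDegMonotone
  rw [Walk.support_map, List.map_map, this]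
  exact hm

theorem kSaturated_iso {W : Type*} [Fintype V] [Fintype W] {G : SimpleGraph V}
    {H : SimpleGraph W} (φ : G ≃g H) {k : ℕ} (h : KSaturated k G) : KSaturated k H := by
  refine ⟨(mp_iso_le φ.symm).trans_lt h.1, fun u v huv hn => ?_⟩
  have huv' : φ.symm u ≠ φ.symm v := fun hh => huv (φ.symm.injective hh)
  have hn' : ¬ G.Adj (φ.symm u) (φ.symm v) := fun hh => hn (φ.symm.map_adj_iff.1 hh)
  refine (h.2 _ _ huv' hn').trans (mp_iso_le ⟨φ.toEquiv, ?_⟩)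
  intro x y
  rw [addEdge_adj huv', addEdge_adj huv]
  have := φ.map_adj_iff (v := x) (w := y)
  simp [RelIso.eq_symm_apply, this]

/-! ### The construction -/

/-- Vertices of the extremal graph, in `a + 1` copies. Copy `x` has outer vertices
`(x, inl (s, i))`, with the two sides `s`, and core vertices `(x, inr q)`; the core vertex
`(x, inr none)` is the apex of the copy. -/
abbrev Vtx (a b : ℕ) : Type := Fin (a + 1) × ((Bool × Fin (b + 1)) ⊕ Option (Fin (b + 1)))

/-- The copy whose apex is joined to the outer vertices of index `i` in copy `x`. -/
def hub {a b : ℕ} (x : Fin (a + 1)) (i : Fin (b + 1)) : Fin (a + 1) := if i = 0 then x else 0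

/-- Adjacency of the extremal graph: each side and each core is a clique, the outer vertex
`(x, inl (s, i))` is joined to `(x, inr (some i))` and to the apex of copy `hub x i`. -/
def adjRel {a b : ℕ} : Vtx a b → Vtx a b → Prop
  | (x, .inl (s, i)), (y, .inl (t, j)) => x = y ∧ s = t ∧ i ≠ j
  | (x, .inl (_, i)), (y, .inr (some j)) => x = y ∧ i = j
  | (y, .inr (some j)), (x, .inl (_, i)) => x = y ∧ i = j
  | (x, .inl (_, i)), (y, .inr none) => y = hub x i
  | (y, .inr none), (x, .inl (_, i)) => y = hub x i
  | (x, .inr p), (y, .inr q) => x = y ∧ p ≠ q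

/-- The extremal graph on `(a + 1) (3 b + 4)` vertices, which is `(2 b + 4)`-saturated. -/
def extG (a b : ℕ) : SimpleGraph (Vtx a b) where
  Adj := adjRel
  symm := by
    constructor
    rintro ⟨x, ⟨s, i⟩ | _ | i⟩ ⟨y, ⟨t, j⟩ | _ | j⟩ h <;> simp only [adjRel] at h ⊢ <;>
      first | exact h | exact ⟨h.1.symm, h.2.symm⟩ | exact ⟨h.1.symm, h.2.1.symm, h.2.2.symm⟩
  loopless := by
    constructor
    rintro ⟨x, ⟨s, i⟩ | _ | i⟩ <;> simp [adjRel]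

section
variable {a b : ℕ}

@[simp] theorem adj_ll {x y : Fin (a + 1)} {s t : Bool} {i j : Fin (b + 1)} :
    (extG a b).Adj (x, .inl (s, i)) (y, .inl (t, j)) ↔ x = y ∧ s = t ∧ i ≠ j := Iff.rfl
@[simp] theorem adj_ls {x y : Fin (a + 1)} {s : Bool} {i j : Fin (b + 1)} :
    (extG a b).Adj (x, .inl (s, i)) (y, .inr (some j)) ↔ x = y ∧ i = j := Iff.rfl
@[simp] theorem adj_sl {x y : Fin (a + 1)} {s : Bool} {i j : Fin (b + 1)} :
    (extG a b).Adj (y, .inr (some j)) (x, .inl (s, i)) ↔ x = y ∧ i = j := Iff.rfl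
@[simp] theorem adj_ln {x y : Fin (a + 1)} {s : Bool} {i : Fin (b + 1)} :
    (extG a b).Adj (x, .inl (s, i)) (y, .inr none) ↔ y = hub x i := Iff.rfl
@[simp] theorem adj_nl {x y : Fin (a + 1)} {s : Bool} {i : Fin (b + 1)} :
    (extG a b).Adj (y, .inr none) (x, .inl (s, i)) ↔ y = hub x i := Iff.rfl
@[simp] theorem adj_rr {x y : Fin (a + 1)} {p q : Option (Fin (b + 1))} :
    (extG a b).Adj (x, .inr p) (y, .inr q) ↔ x = y ∧ p ≠ q := by
  cases p <;> cases q <;> exact Iff.rfl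

open Classical in
theorem gdeg_eq_sum (v : Vtx a b) :
    gdeg (extG a b) v = ∑ w, if (extG a b).Adj v w then 1 else 0 := by
  unfold gdeg
  rw [Finset.sum_boole, Set.ncard_eq_toFinset_card']
  simp only [Nat.cast_id]
  congr 1
  ext w
  simp

theorem gdeg_outer (x : Fin (a + 1)) (s : Bool) (i : Fin (b + 1)) :
    gdeg (extG a b) (x, .inl (s, i)) = b + 2 := by
  classical
  rw [gdeg_eq_sum]
  simp only [Fintype.sum_prod_type, Fintype.sum_sum_type, Fintype.sum_option, adj_ll, adj_ls,
    adj_ln, Finset.sum_add_distrib, ite_and]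
  simp [Finset.sum_ite, Finset.filter_ne, Finset.card_erase_of_mem]

theorem gdeg_some (x : Fin (a + 1)) (i : Fin (b + 1)) :
    gdeg (extG a b) (x, .inr (some i)) = b + 3 := by
  classical
  rw [gdeg_eq_sum]
  simp only [Fintype.sum_prod_type, Fintype.sum_sum_type, Fintype.sum_option, adj_rr, adj_sl,
    Finset.sum_add_distrib, ite_and]
  simp [Finset.sum_ite, Finset.filter_ne, Finset.card_erase_of_mem]
  omega

theorem gdeg_none (x : Fin (a + 1)) (hx : x ≠ 0) :
    gdeg (extG a b) (x, .inr none) = b + 3 := by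
  classical
  rw [gdeg_eq_sum]
  simp only [Fintype.sum_prod_type, Fintype.sum_sum_type, Fintype.sum_option, adj_rr, adj_nl,
    Finset.sum_add_distrib, ite_and, Fin.sum_univ_succ (n := b), hub, Fin.succ_ne_zero]
  simp [hx]
  omega

theorem gdeg_none_zero :
    gdeg (extG a b) (0, .inr none) = 3 * b + 3 + 2 * (a * b) := by
  classical
  rw [gdeg_eq_sum]
  simp only [Fintype.sum_prod_type, Fintype.sum_sum_type, Fintype.sum_option, adj_rr, adj_nl,
    Finset.sum_add_distrib, ite_and, Fin.sum_univ_succ (n := b), hub, Fin.succ_ne_zero]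
  simp
  ring

theorem le_gdeg_core (x : Fin (a + 1)) (q : Option (Fin (b + 1))) :
    b + 3 ≤ gdeg (extG a b) (x, .inr q) := by
  rcases q with _ | i
  · rcases eq_or_ne x 0 with rfl | hx
    · rw [gdeg_none_zero]; omega
    · rw [gdeg_none x hx]
  · rw [gdeg_some]

/-- Twice the number of edges, as the sum of the degrees: `b + 2` for outer vertices, `b + 3` for
core vertices, except for the apex of copy `0`. -/
theorem two_mul_card_edges :
    2 * (extG a b).edgeSet.ncard = (a + 1) * ((b + 1) * (3 * b + 10)) := by
  classical
  have h := (extG a b).sum_degrees_eq_twice_card_edges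
  have hg : ∀ v, (extG a b).degree v = gdeg (extG a b) v := by
    intro v
    rw [gdeg, Set.ncard_eq_toFinset_card', ← card_neighborSet_eq_degree, Set.toFinset_card]
  rw [Set.ncard_eq_toFinset_card', ← edgeFinset, ← h]
  simp only [hg, Fintype.sum_prod_type, Fintype.sum_sum_type, Fintype.sum_option, gdeg_outer,
    gdeg_some, Finset.sum_add_distrib, Fin.sum_univ_succ (n := a), gdeg_none_zero,
    gdeg_none _ (Fin.succ_ne_zero _)]
  simp
  ring

/-- The clique of outer vertices on side `s` of copy `x`. -/
def outer (x : Fin (a + 1)) (s : Bool) : Finset (Vtx a b) :=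
  Finset.univ.map ⟨fun i => (x, .inl (s, i)), fun i j h => by simpa using h⟩

/-- The core of copy `x`, restricted to the indices in `Q`. -/
def core (x : Fin (a + 1)) (Q : Finset (Option (Fin (b + 1)))) : Finset (Vtx a b) :=
  Q.map ⟨fun q => (x, .inr q), fun i j h => by simpa using h⟩

@[simp] theorem mem_outer {x : Fin (a + 1)} {s : Bool} {w : Vtx a b} :
    w ∈ outer x s ↔ ∃ i, (x, .inl (s, i)) = w := by
  simp only [outer, Finset.mem_map, Finset.mem_univ, true_and]; exact Iff.rfl
@[simp] theorem mem_core {x : Fin (a + 1)} {Q : Finset (Option (Fin (b + 1)))} {w : Vtx a b} :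
    w ∈ core x Q ↔ ∃ q ∈ Q, (x, .inr q) = w := by
  simp only [core, Finset.mem_map]; exact Iff.rfl
@[simp] theorem card_outer {x : Fin (a + 1)} {s : Bool} :
    (outer x s : Finset (Vtx a b)).card = b + 1 := by simp [outer]
@[simp] theorem card_core {x : Fin (a + 1)} {Q : Finset (Option (Fin (b + 1)))} :
    (core x Q).card = Q.card := by simp [core]

theorem disjoint_outer_core {x y : Fin (a + 1)} {s : Bool} {Q : Finset (Option (Fin (b + 1)))} :
    Disjoint (outer x s) (core y Q) := by
  rw [Finset.disjoint_left]
  simp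

/-- A non-decreasing path that starts in a core stays in it, because core degrees exceed outer
degrees; one that starts on a side can later enter at most one core. -/
theorem chain_subset (l : List (Vtx a b)) : ∀ v : Vtx a b, (v :: l).IsChain (UpAdj (extG a b)) →
    (∀ x q, v = (x, .inr q) → ∀ w ∈ v :: l, w ∈ core x Finset.univ) ∧
    (∀ x s i, v = (x, .inl (s, i)) →
      ∃ y, ∀ w ∈ v :: l, w ∈ outer x s ∪ core y Finset.univ) := by
  induction l with
  | nil =>
    intro v _
    constructor
    · rintro x q rfl w hw
      simp at hw
      simp [hw]
    · rintro x s i rfl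
      refine ⟨0, fun w hw => ?_⟩
      simp at hw
      simp [hw]
  | cons u l ih =>
    intro v h
    rw [List.isChain_cons_cons] at h
    obtain ⟨⟨hadj, hdeg⟩, hch⟩ := h
    obtain ⟨ih1, ih2⟩ := ih u hch
    constructor
    · rintro x q rfl w hw
      rw [List.mem_cons] at hw
      rcases hw with rfl | hw
      · simp
      · rcases u with ⟨y, ⟨t, j⟩ | r⟩
        · have := le_gdeg_core x q
          rw [gdeg_outer] at hdeg
          omega
        · rw [adj_rr] at hadj
          rw [hadj.1]
          exact ih1 y r rfl w hw
    · rintro x s i rfl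
      rcases u with ⟨y, ⟨t, j⟩ | r⟩
      · rw [adj_ll] at hadj
        obtain ⟨rfl, rfl, -⟩ := hadj
        obtain ⟨z, hz⟩ := ih2 x s j rfl
        refine ⟨z, fun w hw => ?_⟩
        rw [List.mem_cons] at hw
        rcases hw with rfl | hw
        · simp
        · exact hz w hw
      · refine ⟨y, fun w hw => ?_⟩
        rw [List.mem_cons] at hw
        rcases hw with rfl | hw
        · simp
        · exact Finset.mem_union_right _ (ih1 y r rfl w hw)

theorem mp_extG_le : mp (extG a b) ≤ 2 * b + 3 := by
  refine mp_le_of_chain fun l hl hch => ?_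
  rcases l with _ | ⟨v, l⟩
  · simp
  obtain ⟨h1, h2⟩ := chain_subset l v hch
  have key : ∀ T : Finset (Vtx a b), (∀ w ∈ v :: l, w ∈ T) → T.card ≤ 2 * b + 3 →
      (v :: l).length ≤ 2 * b + 3 := by
    intro T hT hc
    rw [← List.toFinset_card_of_nodup hl]
    exact (Finset.card_le_card fun w hw => hT w (by simpa using hw)).trans hc
  rcases v with ⟨x, ⟨s, i⟩ | q⟩
  · obtain ⟨y, hy⟩ := h2 x s i rfl
    refine key _ hy ((Finset.card_union_le _ _).trans ?_)
    simp
    omega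
  · refine key _ (h1 x q rfl) ?_
    simp
    omega

/-! ### Saturation of the construction -/

/-- Two non-adjacent outer vertices `u`, `v`: the path runs through the side of `u`, then `u`, `v`,
and the core of the copy of `v`. -/
theorem sat_outer_outer {x y : Fin (a + 1)} {s t : Bool} {i j : Fin (b + 1)}
    (huv : ((x, .inl (s, i)) : Vtx a b) ≠ (y, .inl (t, j)))
    (hn : ¬ (extG a b).Adj (x, .inl (s, i)) (y, .inl (t, j))) :
    2 * b + 4 ≤ mp (addEdge (extG a b) (x, .inl (s, i)) (y, .inl (t, j))) := by
  have hb : ¬ (x = y ∧ s = t) := by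
    rintro ⟨rfl, rfl⟩
    exact huv (by simpa using hn)
  have h1 : UpPath (addEdge (extG a b) (x, .inl (s, i)) (y, .inl (t, j))) (outer x s)
      (x, .inl (s, i)) := by
    refine .clique (by simp) ?_
    simp only [mem_outer]
    rintro _ ⟨i₁, rfl⟩ _ ⟨i₂, rfl⟩ h12 h1
    refine upAdj_of_ne huv hn (by simpa using h12) (by simp [gdeg_outer]) h1 ?_
    intro h
    simp only [Prod.mk.injEq, Sum.inl.injEq] at h
    tauto
  have hv : ((y, .inl (t, j)) : Vtx a b) ∉ outer x s := by
    simp only [mem_outer, Prod.mk.injEq, Sum.inl.injEq]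
    tauto
  have hd : Disjoint (insert (y, .inl (t, j)) (outer x s))
      (core y (Finset.univ : Finset (Option (Fin (b + 1))))) := by
    rw [Finset.disjoint_insert_left]
    exact ⟨by simp, disjoint_outer_core⟩
  have h2 := (h1.step (upAdj_new huv hn (by simp [gdeg_outer])) hv).traverse
    (T := core y Finset.univ) (a := (y, .inr (some j))) (e := (y, .inr none))
    (upAdj_of_lt huv hn (by simp) (by simp [gdeg_outer, gdeg_some])) (by simp) (by simp)
    (by simp) hd (by
      simp only [mem_core]
      rintro _ ⟨p, -, rfl⟩ _ ⟨q, -, rfl⟩ hpq hp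
      refine upAdj_of_ne huv hn (by simpa using hpq) ?_ (by simp) (by simp)
      rcases p with _ | p
      · exact absurd rfl hp
      · rw [gdeg_some]
        exact le_gdeg_core _ _)
  have := h2.card_le_mp
  rw [Finset.card_union_of_disjoint hd, Finset.card_insert_of_notMem hv] at this
  simp at this
  omega

/-- An outer vertex `u` and a core vertex `v`: the path runs through the side opposite to `u`, then
core vertices of least degree ending with the one joined to `u`, then `u` and `v`. -/
theorem upPath_outer_core {x y : Fin (a + 1)} {s : Bool} {i l : Fin (b + 1)}
    {r p : Option (Fin (b + 1))} {Q : Finset (Option (Fin (b + 1)))}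
    (hn : ¬ (extG a b).Adj (x, .inl (s, i)) (y, .inr r))
    (hl : (extG a b).Adj (x, .inl (!s, l)) (x, .inr p)) (hp : p ∈ Q) (hi : some i ∈ Q)
    (hpi : p = some i → Q = {p}) (hQ : ∀ q ∈ Q, gdeg (extG a b) (x, .inr q) = b + 3)
    (hv : (y, .inr r) ∉ core x Q) :
    UpPath (addEdge (extG a b) (x, .inl (s, i)) (y, .inr r))
      (insert (y, .inr r) (insert (x, .inl (s, i)) (outer x (!s) ∪ core x Q))) (y, .inr r) := by
  have huv : ((x, .inl (s, i)) : Vtx a b) ≠ (y, .inr r) := by simp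
  have h1 : UpPath (addEdge (extG a b) (x, .inl (s, i)) (y, .inr r)) (outer x (!s))
      (x, .inl (!s, l)) := by
    refine .clique (by simp) ?_
    simp only [mem_outer]
    rintro _ ⟨i₁, rfl⟩ _ ⟨i₂, rfl⟩ h12 h1
    exact upAdj_of_ne huv hn (by simpa using h12) (by simp [gdeg_outer]) (by simp) (by simp)
  have h2 := h1.traverse (T := core x Q) (e := (x, .inr (some i)))
    (upAdj_of_ne huv hn hl (by rw [gdeg_outer, hQ p hp]; omega) (by simp) (by simp))
    (by simpa using hp) (by simpa using hi)
    (by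
      intro h
      rw [hpi (by simpa using h)]
      ext w
      simp [eq_comm])
    disjoint_outer_core (by
      simp only [mem_core]
      rintro _ ⟨q₁, hq₁, rfl⟩ _ ⟨q₂, hq₂, rfl⟩ h12 -
      refine upAdj_of_ne huv hn (by simpa using h12) (by rw [hQ _ hq₁, hQ _ hq₂]) (by simp) ?_
      rintro h
      exact hv (h ▸ by simpa using hq₁))
  have h3 := h2.step (c := (x, .inl (s, i))) (upAdj_left huv hn (by simp)
    (by rw [gdeg_outer, gdeg_some]) (by simp) (by
      intro h
      exact hv (h ▸ by simpa using hi))) (by simp)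
  refine h3.step (upAdj_new huv hn ?_) ?_
  · rw [gdeg_outer]
    exact (Nat.le_succ _).trans (le_gdeg_core _ _)
  · rw [Finset.mem_insert, Finset.mem_union]
    rintro (h | h | h)
    · simp at h
    · simp at h
    · exact hv h

theorem card_outer_core {x y : Fin (a + 1)} {s : Bool} {i : Fin (b + 1)}
    {r : Option (Fin (b + 1))} {Q : Finset (Option (Fin (b + 1)))}
    (hv : (y, .inr r) ∉ core x Q) :
    (insert ((y, .inr r) : Vtx a b)
      (insert (x, .inl (s, i)) (outer x (!s) ∪ core x Q))).card = b + Q.card + 3 := by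
  rw [Finset.card_insert_of_notMem (by
      rw [Finset.mem_insert, Finset.mem_union]
      rintro (h | h | h)
      · simp at h
      · simp at h
      · exact hv h),
    Finset.card_insert_of_notMem (by simp), Finset.card_union_of_disjoint disjoint_outer_core]
  simp
  omega

theorem sat_outer_core {x y : Fin (a + 1)} {s : Bool} {i : Fin (b + 1)}
    {r : Option (Fin (b + 1))} (hn : ¬ (extG a b).Adj (x, .inl (s, i)) (y, .inr r)) :
    2 * b + 4 ≤ mp (addEdge (extG a b) (x, .inl (s, i)) (y, .inr r)) := by
  by_cases hc : x = y ∧ r ≠ none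
  · obtain ⟨rfl, hr⟩ := hc
    obtain ⟨j, rfl⟩ := Option.ne_none_iff_exists'.1 hr
    have hij : i ≠ j := by simpa using hn
    have hb : 1 ≤ b := by
      by_contra hb
      exact hij (by ext; omega)
    rcases eq_or_ne x 0 with rfl | hx
    · -- The apex of copy `0` has large degree: it is kept for the end of the path.
      obtain ⟨l, hlj, hl⟩ : ∃ l, l ≠ j ∧
          (l = i → (Finset.univ.erase none).erase (some j) = {some l}) := by
        by_cases h : ∃ l, l ≠ j ∧ l ≠ i
        · obtain ⟨l, h1, h2⟩ := h
          exact ⟨l, h1, fun h => absurd h h2⟩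
        · push Not at h
          refine ⟨i, hij, fun _ => ?_⟩
          ext q
          rcases q with _ | q
          · simp
          · simp only [Finset.mem_erase, Finset.mem_univ, Finset.mem_singleton,
              Option.some.injEq, ne_eq]
            constructor
            · rintro ⟨h1, -⟩
              exact h q h1
            · rintro rfl
              simp [hij]
      have hv : ((0, .inr (some j)) : Vtx a b) ∉
          core 0 ((Finset.univ.erase none).erase (some j)) := by simp
      have h1 := upPath_outer_core (l := l) (p := some l)
        (Q := (Finset.univ.erase none).erase (some j)) hn (by simp) (by simp [hlj])
        (by simp [hij]) (by simpa using hl) (by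
          rintro (_ | q) hq
          · simp at hq
          · exact gdeg_some _ _) hv
      have hz : ((0, .inr none) : Vtx a b) ∉ insert (0, .inr (some j)) (insert (0, .inl (s, i))
          (outer 0 (!s) ∪ core 0 ((Finset.univ.erase none).erase (some j)))) := by simp
      have h2 := (h1.step (c := (0, .inr none)) (upAdj_of_lt (by simp) hn (by simp)
        (by rw [gdeg_some, gdeg_none_zero]; omega)) hz).card_le_mp
      rw [Finset.card_insert_of_notMem hz, card_outer_core hv,
        Finset.card_erase_of_mem (by simp), Finset.card_erase_of_mem (by simp)] at h2
      simp at h2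
      omega
    · have hv : ((x, .inr (some j)) : Vtx a b) ∉ core x (Finset.univ.erase (some j)) := by simp
      have h1 := (upPath_outer_core (l := 0) (p := none)
        (Q := Finset.univ.erase (some j)) hn (by simp [hub]) (by simp)
        (by simp [hij]) (by simp) (by
          rintro (_ | q) hq
          · exact gdeg_none _ hx
          · exact gdeg_some _ _) hv).card_le_mp
      rw [card_outer_core hv, Finset.card_erase_of_mem (by simp)] at h1
      simp at h1
      omega
  · obtain ⟨l, hl⟩ : ∃ l : Fin (b + 1), l = i → Finset.univ.erase none = {some l} := by
      by_cases h : ∃ l, l ≠ i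
      · obtain ⟨l, h⟩ := h
        exact ⟨l, fun h' => absurd h' h⟩
      · push Not at h
        refine ⟨i, fun _ => ?_⟩
        ext q
        rcases q with _ | q
        · simp
        · simp [h q]
    have hv : (y, .inr r) ∉ core x (Finset.univ.erase none) := by
      simp only [mem_core, Finset.mem_erase, Finset.mem_univ, and_true, Prod.mk.injEq,
        Sum.inr.injEq]
      rintro ⟨q, hq, h1, rfl⟩
      exact hc ⟨h1, hq⟩
    have h1 := (upPath_outer_core (l := l) (p := some l)
      (Q := Finset.univ.erase none) hn (by simp) (by simp)
      (by simp) (by simpa using hl) (by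
        rintro (_ | q) hq
        · simp at hq
        · exact gdeg_some _ _) hv).card_le_mp
    rw [card_outer_core hv, Finset.card_erase_of_mem (by simp)] at h1
    simp at h1
    omega

/-- Core vertices `u`, `v` of different copies, where the copy of `u` is not copy `0`: the path
runs through a side and the core of the copy of `u`, ending with `u`, then `v`. -/
theorem sat_core_core {x y : Fin (a + 1)} {q r : Option (Fin (b + 1))} (hx : x ≠ 0)
    (hxy : x ≠ y) : 2 * b + 4 ≤ mp (addEdge (extG a b) (x, .inr q) (y, .inr r)) := by
  have huv : ((x, .inr q) : Vtx a b) ≠ (y, .inr r) := by simp [hxy]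
  have hn : ¬ (extG a b).Adj (x, .inr q) (y, .inr r) := by simp [hxy]
  have hdeg : ∀ p, gdeg (extG a b) (x, .inr p) = b + 3 := by
    rintro (_ | p)
    · exact gdeg_none _ hx
    · exact gdeg_some _ _
  obtain ⟨p, hpq, hp⟩ : ∃ p, p ≠ q ∧ (extG a b).Adj (x, .inl (true, 0)) (x, .inr p) := by
    rcases q with _ | q
    · exact ⟨some 0, by simp, by simp⟩
    · exact ⟨none, by simp, by simp [hub]⟩
  have h1 : UpPath (addEdge (extG a b) (x, .inr q) (y, .inr r)) (outer x true)
      (x, .inl (true, 0)) := by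
    refine .clique (by simp) ?_
    simp only [mem_outer]
    rintro _ ⟨i₁, rfl⟩ _ ⟨i₂, rfl⟩ h12 h1
    exact upAdj_of_ne huv hn (by simpa using h12) (by simp [gdeg_outer]) (by simp) (by simp)
  have h2 := h1.traverse (T := core x Finset.univ) (e := (x, .inr q))
    (upAdj_of_ne huv hn hp (by rw [gdeg_outer, hdeg]; omega) (by simp) (by simp))
    (by simp) (by simp) (by simp [hpq]) disjoint_outer_core (by
      simp only [mem_core]
      rintro _ ⟨q₁, -, rfl⟩ _ ⟨q₂, -, rfl⟩ h12 h1
      exact upAdj_of_ne huv hn (by simpa using h12) (by rw [hdeg, hdeg]) h1 (by simp [hxy]))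
  have hv : (y, .inr r) ∉ outer x true ∪ core x (Finset.univ : Finset (Option (Fin (b + 1)))) := by
    simp [hxy]
  have h3 := (h2.step (upAdj_new huv hn (by rw [hdeg]; exact le_gdeg_core _ _)) hv).card_le_mp
  rw [Finset.card_insert_of_notMem hv, Finset.card_union_of_disjoint disjoint_outer_core] at h3
  simp at h3
  omega

theorem kSaturated_extG : KSaturated (2 * b + 4) (extG a b) := by
  refine ⟨by have := mp_extG_le (a := a) (b := b); omega, ?_⟩
  rintro ⟨x, ⟨s, i⟩ | q⟩ ⟨y, ⟨t, j⟩ | r⟩ huv hn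
  · exact sat_outer_outer huv hn
  · exact sat_outer_core hn
  · rw [addEdge_comm]
    exact sat_outer_core (by rwa [SimpleGraph.adj_comm])
  · have hxy : x ≠ y := by
      rintro rfl
      exact hn (by simpa using huv)
    by_cases hx : x = 0
    · rw [addEdge_comm]
      exact sat_core_core (fun h => hxy (hx.trans h.symm)) hxy.symm
    · exact sat_core_core hx hxy
end

/-! ### The bound -/

theorem stmt_10 (k n : ℕ) (hk : 4 ≤ k) (heven : Even k) (hn : 0 < n)
    (hmod : ((3 * k - 4) / 2) ∣ n) :
    hSat n k ≤ n * (3 * k + 8) * (k - 2) / (4 * (3 * k - 4)) := by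
  obtain ⟨r, rfl⟩ := heven
  obtain ⟨b, rfl⟩ : ∃ b, r = b + 2 := ⟨r - 2, by omega⟩
  have hN : (3 * (b + 2 + (b + 2)) - 4) / 2 = 3 * b + 4 := by omega
  rw [hN] at hmod
  obtain ⟨c, rfl⟩ := hmod
  obtain ⟨a, rfl⟩ : ∃ a, c = a + 1 :=
    ⟨c - 1, by have := Nat.pos_of_mul_pos_left hn; omega⟩
  have hcard : Fintype.card (Vtx a b) = (3 * b + 4) * (a + 1) := by
    simp
    ring
  let e : Vtx a b ≃ Fin ((3 * b + 4) * (a + 1)) := Fintype.equivFinOfCardEq hcard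
  let φ : extG a b ≃g (extG a b).map e.toEmbedding := SimpleGraph.Iso.map e (extG a b)
  have hk : b + 2 + (b + 2) = 2 * b + 4 := by ring
  have hsat : KSaturated (b + 2 + (b + 2)) ((extG a b).map e.toEmbedding) := by
    rw [hk]
    exact kSaturated_iso φ kSaturated_extG
  have hE : ((extG a b).map e.toEmbedding).edgeSet.ncard = (extG a b).edgeSet.ncard :=
    (Set.ncard_congr' φ.mapEdgeSet).symm
  have hle : hSat ((3 * b + 4) * (a + 1)) (b + 2 + (b + 2)) ≤ (extG a b).edgeSet.ncard :=
    Nat.sInf_le ⟨_, hsat, hE⟩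
  refine hle.trans ?_
  have h1 : 3 * (b + 2 + (b + 2)) - 4 = 6 * b + 8 := by omega
  have h2 : b + 2 + (b + 2) - 2 = 2 * b + 2 := by omega
  rw [h1, h2, Nat.le_div_iff_mul_le (by omega)]
  have h3 := two_mul_card_edges (a := a) (b := b)
  have : (extG a b).edgeSet.ncard * (4 * (6 * b + 8)) =
      (2 * (extG a b).edgeSet.ncard) * (2 * (6 * b + 8)) := by ring
  rw [this, h3]
  apply le_of_eq
  ring
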